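/- Let G be a group generated by a finite subset S with 1 ∈ S. Then for every nonempty finite subset X ⊆ G such that XS is a proper subset of G, one has 2(|XS| − |X|) ≥ |S|. (Equivalently, the connectivity satisfies κ(S) ≥ |S|/2.) -/

import Mathlib

open Pointwise

/-!
Call `X` separating if it is nonempty and `XS ≠ G`, and let its excess be `|XS| - |X|`. Among the
separating sets for `S` and for `S⁻¹`, take one, `A`, of least excess `κ` and then of least size;
say it separates for `S`. If another such set `B` for `S` meets `A`, then `A = B`: excess is
submodular, so once `A ∪ B` has excess at least `κ`, the set `A ∩ B` has excess at most `κ`, and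
minimality of the size applies. The bound on `A ∪ B` is not automatic if `(A ∪ B)S = G`. In that
case `G` is finite and the complement of `AS` is separating for `S⁻¹` with excess at most `κ`, so
it has at least `|A|` elements; hence `|G| ≥ 2|A| + κ ≥ |A ∪ B| + κ`.

So the left translates of `A` are equal or disjoint, and then so are its right translates. Thus
`|A|` divides `|AS|`, and as `AS ≠ A` we get `|AS| ≥ 2|A|`. Therefore
`2(|AS| - |A|) ≥ |AS| ≥ |S|`.
-/

open scoped Finset

section Mul

variable {G : Type*} [Mul G] [DecidableEq G] {S A B : Finset G}

/-- The excess `|XS| - |X|`, which is the size of the boundary of `X` in the Cayley graph of `S`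
when `1 ∈ S`. It is integer-valued because it is negative when `S = ∅` and `X ≠ ∅`. -/
def excess (S X : Finset G) : ℤ := #(X * S) - #X

/-- `X` is an admissible set in the definition of the connectivity of `S`: it is nonempty and `XS`
is a proper subset of the ambient group. -/
structure Separates (S X : Finset G) : Prop where
  nonempty : X.Nonempty
  coe_mul_ne_univ : (↑(X * S) : Set G) ≠ Set.univ

lemma excess_inter_add_excess_union_le (S A B : Finset G) :
    excess S (A ∩ B) + excess S (A ∪ B) ≤ excess S A + excess S B := by
  have h_inter : #((A ∩ B) * S) ≤ #(A * S ∩ (B * S)) :=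
    Finset.card_le_card Finset.inter_mul_subset
  have h_union : (A ∪ B) * S = A * S ∪ B * S := Finset.union_mul
  have h_card := Finset.card_union_add_card_inter A B
  have h_card_mul := Finset.card_union_add_card_inter (A * S) (B * S)
  simp only [excess, h_union]
  omega

lemma Separates.mono (hB : Separates S B) (hA : A.Nonempty) (hAB : A ⊆ B) : Separates S A where
  nonempty := hA
  coe_mul_ne_univ h := hB.coe_mul_ne_univ <| Set.eq_univ_of_univ_subset <|
    h ▸ Finset.coe_subset.2 (Finset.mul_subset_mul_right hAB)

end Mul

section Group

variable {G : Type*} [Group G]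

lemma isBlock_mulOpposite_of_isBlock {A : Set G} (hA : MulAction.IsBlock G A) :
    MulAction.IsBlock Gᵐᵒᵖ A := by
  have mul_mem {x y z : G} (hx : x ∈ A) (hy : y ∈ A) (hz : z ∈ A) : x * y⁻¹ * z ∈ A := by
    rw [← hA.smul_eq_of_mem hy (g := x * y⁻¹) (by simpa using hx)]
    exact Set.smul_mem_smul_set hz
  refine MulAction.isBlock_iff_smul_eq_of_mem.2 fun g a ha hga ↦ ?_
  refine MulAction.mem_stabilizer_set.2 fun b ↦ ⟨fun hgb ↦ ?_, fun hb ↦ ?_⟩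
  · simpa using mul_mem hgb hga ha
  · simpa using mul_mem hb ha hga

variable [DecidableEq G] {S A B X : Finset G}

lemma card_dvd_card_mul_of_isBlock (hA : MulAction.IsBlock G (A : Set G)) (S : Finset G) :
    #A ∣ #(A * S) := by
  refine Finset.card_dvd_card_mul_left ?_
  rintro _ ⟨s, -, rfl⟩ _ ⟨t, -, rfl⟩ hst
  have h := isBlock_mulOpposite_of_isBlock hA (g₁ := .op s) (g₂ := .op t)
  simp only [← Finset.coe_smul_finset, Finset.coe_injective.ne_iff, Finset.disjoint_coe] at h
  exact h hst

lemma coe_eq_univ_of_mul_subset (hS : Subgroup.closure (S : Set G) = ⊤) (hA : A.Nonempty)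
    (hAS : A * S ⊆ A) : (A : Set G) = Set.univ := by
  have h_closure : Subgroup.closure (S : Set G) ≤ (MulAction.stabilizer Gᵐᵒᵖ A).unop :=
    (Subgroup.closure_le _).2 fun s hs ↦
      MulAction.mem_stabilizer_finset'.2 fun _ ha ↦ hAS (Finset.mul_mem_mul ha hs)
  obtain ⟨a, ha⟩ := hA
  refine Set.eq_univ_of_forall fun x ↦ ?_
  have hx : a⁻¹ * x ∈ Subgroup.closure (S : Set G) := hS ▸ Subgroup.mem_top _
  simpa using (MulAction.mem_stabilizer_finset.1 (h_closure hx) a).2 ha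

lemma Separates.card_lt_card_mul (hA : Separates S A) (h_one : 1 ∈ S)
    (hS : Subgroup.closure (S : Set G) = ⊤) : #A < #(A * S) := by
  have h_sub : A ⊆ A * S := Finset.subset_mul_left A h_one
  refine Finset.card_lt_card (h_sub.ssubset_of_not_subset fun h ↦ hA.coe_mul_ne_univ ?_)
  rw [h.antisymm h_sub]
  exact coe_eq_univ_of_mul_subset hS hA.nonempty h

lemma excess_nonneg (hS : S.Nonempty) (X : Finset G) : 0 ≤ excess S X :=
  sub_nonneg.2 <| Nat.cast_le.2 <| Finset.card_le_card_mul_right hS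

lemma excess_smul (g : G) (S X : Finset G) : excess S (g • X) = excess S X := by
  simp only [excess, smul_mul_assoc, Finset.card_smul_finset]

lemma Separates.smul (hX : Separates S X) (g : G) : Separates S (g • X) where
  nonempty := hX.nonempty.smul_finset
  coe_mul_ne_univ := by
    simpa only [smul_mul_assoc, Finset.coe_smul_finset, ne_eq, Set.smul_set_eq_univ]
      using hX.coe_mul_ne_univ

section Fintype

variable [Fintype G]

lemma compl_mul_mul_inv_subset (X S : Finset G) : (X * S)ᶜ * S⁻¹ ⊆ Xᶜ := by
  refine Finset.mul_subset_iff.2 fun y hy t ht ↦ Finset.mem_compl.2 fun hyt ↦ ?_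
  refine Finset.mem_compl.1 hy ?_
  simpa using Finset.mul_mem_mul hyt (Finset.mem_inv'.1 ht)

lemma excess_inv_compl_mul_le (S X : Finset G) : excess S⁻¹ (X * S)ᶜ ≤ excess S X := by
  have h_sub := Finset.card_le_card (compl_mul_mul_inv_subset X S)
  have h_card := Finset.card_add_card_compl X
  have h_card_mul := Finset.card_add_card_compl (X * S)
  simp only [excess]
  omega

lemma Separates.compl_mul (hX : Separates S X) : Separates S⁻¹ (X * S)ᶜ where
  nonempty := by
    rw [Finset.nonempty_iff_ne_empty, ne_eq, Finset.compl_eq_empty_iff, ← Finset.coe_eq_univ]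
    exact hX.coe_mul_ne_univ
  coe_mul_ne_univ h := by
    obtain ⟨x, hx⟩ := hX.nonempty
    have hx' : x ∈ (X * S)ᶜ * S⁻¹ := Finset.mem_coe.1 (h ▸ Set.mem_univ x)
    exact Finset.mem_compl.1 (compl_mul_mul_inv_subset X S hx') hx

end Fintype

/-- `A` is an atom of `S` in Hamidoune's sense (a separating set of least excess and, subject to
that, of least size) that is moreover least when compared with the separating sets of `S⁻¹`. -/
structure IsLeastAtom (S A : Finset G) : Prop where
  separates : Separates S A
  excess_le ⦃T B : Finset G⦄ (hT : T = S ∨ T = S⁻¹) (hB : Separates T B) :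
    excess S A ≤ excess T B
  card_le ⦃T B : Finset G⦄ (hT : T = S ∨ T = S⁻¹) (hB : Separates T B)
    (h : excess T B ≤ excess S A) : #A ≤ #B

lemma exists_isLeastAtom (hS : S.Nonempty) (hX : Separates S X) :
    ∃ T A, (T = S ∨ T = S⁻¹) ∧ IsLeastAtom T A := by
  let rank (p : Finset G × Finset G) : ℕ ×ₗ ℕ := toLex ((excess p.1 p.2).toNat, #p.2)
  obtain ⟨⟨T, A⟩, ⟨hTS, hA⟩, h_min⟩ := (InvImage.wf rank wellFounded_lt).has_min
    {p | (p.1 = S ∨ p.1 = S⁻¹) ∧ Separates p.1 p.2} ⟨(S, X), .inl rfl, hX⟩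
  dsimp only at hTS hA
  have h_nonneg {U : Finset G} (hU : U = S ∨ U = S⁻¹) (B : Finset G) : 0 ≤ excess U B := by
    obtain rfl | rfl := hU
    exacts [excess_nonneg hS B, excess_nonneg hS.inv B]
  have h_lex {U B : Finset G} (hU : U = T ∨ U = T⁻¹) (hB : Separates U B) :
      excess T A < excess U B ∨ excess T A = excess U B ∧ #A ≤ #B := by
    have hUS : U = S ∨ U = S⁻¹ := by
      obtain rfl | rfl := hTS <;> simpa [or_comm] using hU
    have h_rank : rank (T, A) ≤ rank (U, B) := not_lt.1 (h_min (U, B) ⟨hUS, hB⟩)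
    simp only [rank, Prod.Lex.toLex_le_toLex] at h_rank
    have hA_nonneg := h_nonneg hTS A
    have hB_nonneg := h_nonneg hUS B
    omega
  refine ⟨T, A, hTS, hA, fun U B hU hB ↦ ?_, fun U B hU hB h ↦ ?_⟩ <;>
  · have := h_lex hU hB
    omega

namespace IsLeastAtom

lemma smul (hA : IsLeastAtom S A) (g : G) : IsLeastAtom S (g • A) where
  separates := hA.separates.smul g
  excess_le T B hT hB := by
    rw [excess_smul]
    exact hA.excess_le hT hB
  card_le T B hT hB h := by
    rw [excess_smul] at h
    rw [Finset.card_smul_finset]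
    exact hA.card_le hT hB h

lemma two_mul_card_add_excess_le [Fintype G] (hA : IsLeastAtom S A) :
    2 * #A + excess S A ≤ Fintype.card G := by
  have h_compl : #A ≤ #(A * S)ᶜ :=
    hA.card_le (.inr rfl) hA.separates.compl_mul (excess_inv_compl_mul_le S A)
  have h_card := Finset.card_add_card_compl (A * S)
  simp only [excess]
  omega

lemma excess_le_of_card_le (hA : IsLeastAtom S A) (hX : X.Nonempty) (h_card : #X ≤ 2 * #A) :
    excess S A ≤ excess S X := by
  by_cases hXS : (↑(X * S) : Set G) = Set.univ
  · have : Finite G := Set.finite_univ_iff.1 (hXS ▸ (X * S).finite_toSet)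
    have := Fintype.ofFinite G
    have h_univ : #(X * S) = Fintype.card G := by
      rw [Finset.coe_eq_univ.1 hXS, Finset.card_univ]
    have h_bound := hA.two_mul_card_add_excess_le
    rw [excess.eq_def S X, h_univ]
    omega
  · exact hA.excess_le (.inl rfl) ⟨hX, hXS⟩

lemma card_eq (hA : IsLeastAtom S A) (hB : IsLeastAtom S B) : #A = #B :=
  (hA.card_le (.inl rfl) hB.separates (hB.excess_le (.inl rfl) hA.separates)).antisymm
    (hB.card_le (.inl rfl) hA.separates (hA.excess_le (.inl rfl) hB.separates))

lemma eq_of_inter_nonempty (hA : IsLeastAtom S A) (hB : IsLeastAtom S B)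
    (hAB : (A ∩ B).Nonempty) : A = B := by
  have h_card : #A = #B := hA.card_eq hB
  have h_union : excess S A ≤ excess S (A ∪ B) := by
    refine hA.excess_le_of_card_le (hA.separates.nonempty.mono Finset.subset_union_left) ?_
    have := Finset.card_union_le A B
    omega
  have h_inter : excess S (A ∩ B) ≤ excess S A := by
    have h_submodular := excess_inter_add_excess_union_le S A B
    have h_excess := hB.excess_le (.inl rfl) hA.separates
    omega
  have h_card_inter : #A ≤ #(A ∩ B) :=
    hA.card_le (.inl rfl) (hA.separates.mono hAB Finset.inter_subset_left) h_inter
  have h_sub : A ⊆ B :=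
    Finset.inter_eq_left.1 (Finset.eq_of_subset_of_card_le Finset.inter_subset_left h_card_inter)
  exact Finset.eq_of_subset_of_card_le h_sub h_card.ge

lemma isBlock (hA : IsLeastAtom S A) : MulAction.IsBlock G (A : Set G) := by
  refine MulAction.isBlock_iff_smul_eq_of_nonempty.2 fun g hg ↦ ?_
  rw [← Finset.coe_smul_finset] at hg ⊢
  exact congrArg _ ((hA.smul g).eq_of_inter_nonempty hA (by exact_mod_cast hg))

lemma two_mul_card_le_card_mul (hA : IsLeastAtom S A) (h_one : 1 ∈ S)
    (hS : Subgroup.closure (S : Set G) = ⊤) : 2 * #A ≤ #(A * S) := by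
  obtain ⟨k, hk⟩ := card_dvd_card_mul_of_isBlock hA.isBlock S
  have h_lt : #A * 1 < #A * k := by
    rw [mul_one, ← hk]
    exact hA.separates.card_lt_card_mul h_one hS
  rw [hk, mul_comm]
  exact Nat.mul_le_mul_left _ (lt_of_mul_lt_mul_left' h_lt)

lemma card_le_two_mul_excess (hA : IsLeastAtom S A) (h_one : 1 ∈ S)
    (hS : Subgroup.closure (S : Set G) = ⊤) : #S ≤ 2 * excess S A := by
  have h_card : #S ≤ #(A * S) := Finset.card_le_card_mul_left hA.separates.nonempty
  have h_two_mul := hA.two_mul_card_le_card_mul h_one hS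
  simp only [excess]
  omega

end IsLeastAtom

end Group

/-- Let `G` be a group generated by a finite subset `S` with `1 ∈ S`. Then for
every nonempty finite `X ⊆ G` with `XS` a proper subset of `G`, one has
`2(|XS| − |X|) ≥ |S|`, i.e. `κ(S) ≥ |S|/2`. -/
theorem stmt_14 {G : Type*} [Group G] [DecidableEq G] (S : Finset G)
    (h1 : (1 : G) ∈ S) (hgen : Subgroup.closure (S : Set G) = ⊤)
    (X : Finset G) (hX : X.Nonempty) (hproper : (↑(X * S) : Set G) ≠ Set.univ) :
    S.card ≤ 2 * ((X * S).card - X.card) := by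
  have hSX : Separates S X := ⟨hX, hproper⟩
  suffices h : (#S : ℤ) ≤ 2 * excess S X by
    simp only [excess] at h
    omega
  obtain ⟨T, A, rfl | rfl, hA⟩ := exists_isLeastAtom ⟨1, h1⟩ hSX
  · calc
      (#T : ℤ) ≤ 2 * excess T A := hA.card_le_two_mul_excess h1 hgen
      _ ≤ 2 * excess T X := by gcongr; exact hA.excess_le (.inl rfl) hSX
  · calc
      (#S : ℤ) = #S⁻¹ := by rw [Finset.card_inv]
      _ ≤ 2 * excess S⁻¹ A := hA.card_le_two_mul_excess (by simpa using h1)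
        (by rw [Finset.coe_inv, Subgroup.closure_inv, hgen])
      _ ≤ 2 * excess S X := by gcongr; exact hA.excess_le (.inr (inv_inv S).symm) hSX
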